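/- arXiv:2003.07401 — 6 statements merged into one kernel-verified Lean document; each statement's English description precedes it below -/
import Mathlib

section
/- For every rotation matrix R ∈ SO(3), the squared Euclidean norm of vex(P_a(R)) satisfies ‖vex(P_a(R))‖² = 4(1 − ‖R‖_I)‖R‖_I. -/
/-!
Since `R` is orthogonal with `det R = 1`, its adjugate is `Rᵀ`; comparing traces, the sum of the
principal `2 × 2` minors of `R` equals `t := tr R`. Moreover `tr (Rᵀ R) = 3`, so the squares of the
entries sum to `3`. Expanding, `4 ‖vex(P_a(R))‖²` is the sum of the squared off-diagonal entries
minus `2 ∑_{i<j} R i j * R j i`, and the two trace identities turn it into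
`3 + 2 t - t² = (1 + t) (3 - t)`, which is `4 * (4 (1 - ‖R‖_I) ‖R‖_I)` because
`‖R‖_I = (3 - t) / 4`.
-/

open Matrix

noncomputable section

/-- The skew-symmetric matrix `[x]×` associated to `x ∈ ℝ³`. -/
def skew (x : Fin 3 → ℝ) : Matrix (Fin 3) (Fin 3) ℝ :=
  !![0, -x 2, x 1; x 2, 0, -x 0; -x 1, x 0, 0]

/-- The anti-symmetric projection `P_a(A) = (A - Aᵀ)/2`. -/
def Pa (A : Matrix (Fin 3) (Fin 3) ℝ) : Matrix (Fin 3) (Fin 3) ℝ :=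
  (1/2 : ℝ) • (A - Aᵀ)

/-- `vex(P_a(A)) = (1/2)(A₃₂−A₂₃, A₁₃−A₃₁, A₂₁−A₁₂)`. -/
def vexPa (A : Matrix (Fin 3) (Fin 3) ℝ) : Fin 3 → ℝ :=
  ![(1/2) * (A 2 1 - A 1 2), (1/2) * (A 0 2 - A 2 0), (1/2) * (A 1 0 - A 0 1)]

/-- Normalized Euclidean distance `‖A‖_I = (1/4)Tr(I₃ − A)`. -/
def normI (A : Matrix (Fin 3) (Fin 3) ℝ) : ℝ :=
  (1/4) * (1 - A).trace

/-- Lemma 1, eq. (25): for every `R ∈ SO(3)`,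
`‖vex(P_a(R))‖² = 4(1 − ‖R‖_I)‖R‖_I`. -/
theorem vexPa_sq_norm_of_SO3 (R : Matrix (Fin 3) (Fin 3) ℝ)
    (hR : Rᵀ * R = 1) (hR' : R * Rᵀ = 1) (hdet : R.det = 1) :
    vexPa R ⬝ᵥ vexPa R = 4 * (1 - normI R) * normI R := by
  -- The inverse `Rᵀ` is the adjugate, since `det R = 1`.
  have hadj : R.adjugate = Rᵀ := by
    calc R.adjugate = (Rᵀ * R) * R.adjugate := by rw [hR, one_mul]
      _ = Rᵀ := by rw [Matrix.mul_assoc, Matrix.mul_adjugate, hdet, one_smul, mul_one]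
  have hminors : R.adjugate.trace = R.trace := by rw [hadj, trace_transpose]
  have hsq : (Rᵀ * R).trace = 3 := by rw [hR]; simp
  rw [adjugate_fin_three] at hminors
  simp [trace, Fin.sum_univ_three, Matrix.mul_apply] at hminors hsq
  simp [vexPa, normI, trace, Fin.sum_univ_three, dotProduct]
  linear_combination (1/4) * hsq + (1/2) * hminors
end
end

section
/- Let M ∈ ℝ^{3×3} be symmetric positive definite with Tr(M) = 3, let M̄ := Tr(M)·I₃ − M, and let λ̲ > 0 be the minimum eigenvalue of M̄. Then for every R ∈ SO(3) with Tr(R) ≠ −1, one has (2/λ̲) · ‖vex(P_a(M R))‖² / (1 + Tr(M⁻¹ M R)) ≥ ‖M R‖_I, where Tr(M⁻¹ M R) = Tr(R). -/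
/-!
Away from `Tr R = -1` a rotation is determined by `s = 1 + Tr R > 0` and the axis vector
`u = vex(P_a(R))` through `s R = s I + s [u]× + 2 [u]×²` (`rotation_eq`). With `N = Tr(M) I - M` and
`M` symmetric, this gives `s (Tr M - Tr(M R)) = 2 uᵀ N u` and
`s vex(P_a(M R)) = (s/2) N u - u × N u`. The two terms on the right are orthogonal, so
`4 ‖vex(P_a(M R))‖² ≥ ‖N u‖²`, and the claim reduces to `‖N u‖² ≥ lam uᵀ N u`. The latter follows
from the Rayleigh bound `uᵀ N u ≥ lam ‖u‖²` and the Cauchy–Schwarz inequality.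
-/

open Matrix

noncomputable section

/-- The Rayleigh bound: the least eigenvalue of a Hermitian matrix bounds its quadratic form from
below. -/
lemma rayleigh_lower {N : Matrix (Fin 3) (Fin 3) ℝ} (hN : N.IsHermitian) (x : Fin 3 → ℝ) :
    (⨅ i, hN.eigenvalues i) * (x ⬝ᵥ x) ≤ x ⬝ᵥ (N *ᵥ x) := by
  set l := ⨅ i, hN.eigenvalues i with hl
  have hB : (N - l • (1 : Matrix (Fin 3) (Fin 3) ℝ)).IsHermitian := by
    apply hN.sub
    simp [Matrix.IsHermitian]
  have hpsd : (N - l • (1 : Matrix (Fin 3) (Fin 3) ℝ)).PosSemidef := by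
    rw [hB.posSemidef_iff_eigenvalues_nonneg]
    intro i
    have h1 := hB.eigenvalues_mem_spectrum_real i
    rw [← spectrum.add_mem_add_iff (s := l)] at h1
    rw [Algebra.algebraMap_eq_smul_one, add_sub_cancel,
      hN.spectrum_real_eq_range_eigenvalues] at h1
    obtain ⟨j, hj⟩ := h1
    have h2 : l ≤ hN.eigenvalues j := ciInf_le (Set.finite_range _).bddBelow j
    simp only [Pi.zero_apply]
    linarith
  have h := hpsd.re_dotProduct_nonneg x
  simp only [sub_mulVec, smul_mulVec, one_mulVec, dotProduct_sub, dotProduct_smul, star_trivial,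
    smul_eq_mul, RCLike.re_to_real] at h
  linarith

/-- If the quadratic form of `N` is bounded below by `l > 0`, then `N² ≥ l N`, tested on `x`. -/
lemma le_mulVec_sq {N : Matrix (Fin 3) (Fin 3) ℝ} {l : ℝ} (hl : 0 < l) (x : Fin 3 → ℝ)
    (h : l * (x ⬝ᵥ x) ≤ x ⬝ᵥ (N *ᵥ x)) :
    l * (x ⬝ᵥ (N *ᵥ x)) ≤ (N *ᵥ x) ⬝ᵥ (N *ᵥ x) := by
  have hcs : (x ⬝ᵥ (N *ᵥ x)) ^ 2 ≤ (x ⬝ᵥ x) * ((N *ᵥ x) ⬝ᵥ (N *ᵥ x)) := by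
    simpa only [dotProduct, sq] using
      Finset.sum_mul_sq_le_sq_mul_sq Finset.univ x (N *ᵥ x)
  have hy : 0 ≤ (N *ᵥ x) ⬝ᵥ (N *ᵥ x) := by
    simpa using dotProduct_star_self_nonneg (N *ᵥ x)
  generalize (N *ᵥ x) ⬝ᵥ (N *ᵥ x) = y at *
  generalize x ⬝ᵥ (N *ᵥ x) = q at *
  generalize x ⬝ᵥ x = r at *
  rcases le_or_gt q 0 with hq | hq
  · nlinarith
  · have h1 : l * q ^ 2 ≤ q * y := by
      calc l * q ^ 2 ≤ l * (r * y) := by gcongr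
        _ = (l * r) * y := by ring
        _ ≤ q * y := by gcongr
    exact le_of_mul_le_mul_left (by linarith : q * (l * q) ≤ q * y) hq

/-- Rodrigues' formula, with denominators cleared: it holds even when `Tr R = -1`. -/
lemma rotation_eq {R : Matrix (Fin 3) (Fin 3) ℝ}
    (hR : Rᵀ * R = 1) (hR' : R * Rᵀ = 1) (hdet : R.det = 1) :
    (1 + R.trace) • R = (1 + R.trace) • (1 + skew (vexPa R))
      + (2 : ℝ) • (skew (vexPa R) * skew (vexPa R)) := by
  -- For a rotation the adjugate is the transpose: every entry equals its own cofactor.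
  have hadj : R.adjugate = Rᵀ := by
    calc R.adjugate = Rᵀ * R * R.adjugate := by rw [hR, one_mul]
      _ = Rᵀ := by rw [mul_assoc, mul_adjugate, hdet, one_smul, mul_one]
  rw [adjugate_fin_three] at hadj
  have c (i j) := congrFun (congrFun hadj i) j
  have a (i j) := congrFun (congrFun hR i) j
  have b (i j) := congrFun (congrFun hR' i) j
  have c00 := c 0 0
  have c01 := c 0 1
  have c02 := c 0 2
  have c10 := c 1 0
  have c11 := c 1 1
  have c12 := c 1 2
  have c20 := c 2 0
  have c21 := c 2 1
  have c22 := c 2 2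
  have a00 := a 0 0
  have a11 := a 1 1
  have a22 := a 2 2
  have a01 := a 0 1
  have a02 := a 0 2
  have a12 := a 1 2
  have b00 := b 0 0
  have b11 := b 1 1
  have b22 := b 2 2
  have b01 := b 0 1
  have b02 := b 0 2
  have b12 := b 1 2
  clear a b c hadj hR hR' hdet
  simp [Matrix.mul_apply, Fin.sum_univ_three] at *
  ext i j
  fin_cases i <;> fin_cases j <;>
    simp [trace_fin_three, skew, vexPa] <;>
    grind

/-- With `y = N u`, `N = Tr(M) I - M`: the norm bound comes from
`s vex(P_a(M R)) = (s/2) y - u × y`, whose two terms are orthogonal; the trace formula from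
`Tr(M [u]×²) = -uᵀ N u`. -/
lemma norm_mulVec_le {M R : Matrix (Fin 3) (Fin 3) ℝ} (hM : M.IsSymm) {s : ℝ} (hs : 0 < s)
    {u : Fin 3 → ℝ} (h : s • R = s • (1 + skew u) + (2 : ℝ) • (skew u * skew u))
    {y : Fin 3 → ℝ} (hy : y = (M.trace • (1 : Matrix (Fin 3) (Fin 3) ℝ) - M) *ᵥ u) :
    y ⬝ᵥ y ≤ 4 * (vexPa (M * R) ⬝ᵥ vexPa (M * R)) ∧
      s * (M.trace - (M * R).trace) = 2 * (u ⬝ᵥ y) := by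
  have r (i j) := congrFun (congrFun h i) j
  have m10 := hM.apply 0 1
  have m20 := hM.apply 0 2
  have m21 := hM.apply 1 2
  have r00 := r 0 0
  have r01 := r 0 1
  have r02 := r 0 2
  have r10 := r 1 0
  have r11 := r 1 1
  have r12 := r 1 2
  have r20 := r 2 0
  have r21 := r 2 1
  have r22 := r 2 2
  have y0 := congrFun hy 0
  have y1 := congrFun hy 1
  have y2 := congrFun hy 2
  clear r h hy
  simp [Fin.sum_univ_three, trace_fin_three, skew, mulVec,
    dotProduct] at r00 r01 r02 r10 r11 r12 r20 r21 r22 y0 y1 y2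
  have v0 : s * vexPa (M * R) 0 = s / 2 * y 0 - (u 1 * y 2 - u 2 * y 1) := by
    simp [vexPa, Matrix.mul_apply, Fin.sum_univ_three]
    rw [y0, y1, y2, m10, m20, m21]
    linear_combination (M 0 2 * r01 - M 0 1 * r02 + M 1 2 * r11 - M 1 1 * r12 + M 2 2 * r21 - M 1 2 * r22) / 2
  have v1 : s * vexPa (M * R) 1 = s / 2 * y 1 - (u 2 * y 0 - u 0 * y 2) := by
    simp [vexPa, Matrix.mul_apply, Fin.sum_univ_three]
    rw [y0, y1, y2, m10, m20, m21]
    linear_combination (M 0 0 * r02 - M 0 2 * r00 + M 0 1 * r12 - M 1 2 * r10 + M 0 2 * r22 - M 2 2 * r20) / 2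
  have v2 : s * vexPa (M * R) 2 = s / 2 * y 2 - (u 0 * y 1 - u 1 * y 0) := by
    simp [vexPa, Matrix.mul_apply, Fin.sum_univ_three]
    rw [y0, y1, y2, m10, m20, m21]
    linear_combination (M 0 1 * r00 - M 0 0 * r01 + M 1 1 * r10 - M 0 1 * r11 + M 1 2 * r20 - M 0 2 * r21) / 2
  constructor
  · have key : s ^ 2 * (4 * (vexPa (M * R) ⬝ᵥ vexPa (M * R))) = s ^ 2 * (y ⬝ᵥ y)
        + 4 * ((u 1 * y 2 - u 2 * y 1) ^ 2 + (u 2 * y 0 - u 0 * y 2) ^ 2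
          + (u 0 * y 1 - u 1 * y 0) ^ 2) := by
      simp only [dotProduct, Fin.sum_univ_three]
      calc _ = 4 * ((s * vexPa (M * R) 0) ^ 2 + (s * vexPa (M * R) 1) ^ 2
            + (s * vexPa (M * R) 2) ^ 2) := by ring
        _ = _ := by rw [v0, v1, v2]; ring
    refine le_of_mul_le_mul_left ?_ (pow_pos hs 2)
    rw [key]
    have := sq_nonneg (u 1 * y 2 - u 2 * y 1)
    have := sq_nonneg (u 2 * y 0 - u 0 * y 2)
    have := sq_nonneg (u 0 * y 1 - u 1 * y 0)
    linarith
  · simp only [Matrix.mul_apply, Fin.sum_univ_three, trace_fin_three, dotProduct]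
    rw [y0, y1, y2, m10, m20, m21]
    linear_combination -(M 0 0 * r00 + M 0 1 * r10 + M 0 2 * r20 + M 0 1 * r01 + M 1 1 * r11 + M 1 2 * r21 + M 0 2 * r02 + M 1 2 * r12 + M 2 2 * r22)

/-- On `SO(3)`, `4 ‖vex(P_a(R))‖² = (3 - Tr R)(1 + Tr R)` and `Tr R ≤ 3`, so `Tr R ≥ -1`. -/
lemma one_add_trace_pos {R : Matrix (Fin 3) (Fin 3) ℝ}
    (hR : Rᵀ * R = 1) (hR' : R * Rᵀ = 1) (hdet : R.det = 1) (htrR : R.trace ≠ -1) :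
    0 < 1 + R.trace := by
  have h := congrArg trace (rotation_eq hR hR' hdet)
  have a (i) := congrFun (congrFun hR i) i
  have a0 := a 0
  have a1 := a 1
  have a2 := a 2
  simp [Matrix.mul_apply, Fin.sum_univ_three] at a0 a1 a2
  have hle : R.trace ≤ 3 := by
    rw [trace_fin_three]
    nlinarith [sq_nonneg (R 0 0 - 1), sq_nonneg (R 1 1 - 1), sq_nonneg (R 2 2 - 1),
      sq_nonneg (R 0 1), sq_nonneg (R 0 2), sq_nonneg (R 1 0), sq_nonneg (R 1 2),
      sq_nonneg (R 2 0), sq_nonneg (R 2 1)]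
  generalize vexPa R = u at h
  simp only [trace_smul, trace_add, trace_one, smul_eq_mul] at h
  generalize R.trace = t at *
  simp [skew, trace_fin_three] at h
  by_contra hneg
  have ht : t < -1 := lt_of_le_of_ne (by linarith) htrR
  nlinarith [sq_nonneg (u 0), sq_nonneg (u 1), sq_nonneg (u 2)]

/-- Lemma 1, eq. (26): for `M` symmetric positive definite with
`Tr M = 3`, `M̄ = Tr(M)I − M`, `λ̲ > 0` the minimum eigenvalue of `M̄`, and every
`R ∈ SO(3)` with `Tr R ≠ −1`, one has `Tr(M⁻¹MR) = Tr R` and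
`(2/λ̲)·‖vex(P_a(MR))‖²/(1 + Tr(M⁻¹MR)) ≥ ‖MR‖_I`. -/
theorem vexPa_sq_norm_MR_ineq (M : Matrix (Fin 3) (Fin 3) ℝ)
    (hsymm : M.IsSymm) (hpd : M.PosDef) (htr : M.trace = 3)
    (hherm : (M.trace • (1 : Matrix (Fin 3) (Fin 3) ℝ) - M).IsHermitian)
    (lam : ℝ) (hlam : lam = ⨅ i, hherm.eigenvalues i) (hlampos : 0 < lam)
    (R : Matrix (Fin 3) (Fin 3) ℝ)
    (hR : Rᵀ * R = 1) (hR' : R * Rᵀ = 1) (hdet : R.det = 1)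
    (htrR : R.trace ≠ -1) :
    (M⁻¹ * (M * R)).trace = R.trace ∧
    (2 / lam) * (vexPa (M * R) ⬝ᵥ vexPa (M * R)) / (1 + (M⁻¹ * (M * R)).trace)
      ≥ normI (M * R) := by
  have hcancel : M⁻¹ * (M * R) = R :=
    nonsing_inv_mul_cancel_left M R hpd.det_pos.ne'.isUnit
  rw [hcancel]
  refine ⟨rfl, ?_⟩
  have hs := one_add_trace_pos hR hR' hdet htrR
  obtain ⟨h1, h2⟩ := norm_mulVec_le hsymm hs (rotation_eq hR hR' hdet) rfl
  have hray := rayleigh_lower hherm (vexPa R)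
  rw [← hlam] at hray
  have h3 := le_mulVec_sq hlampos _ hray
  have hI : normI (M * R) = (M.trace - (M * R).trace) / 4 := by
    rw [normI, trace_sub, htr, trace_one, Fintype.card_fin]
    push_cast
    ring
  rw [ge_iff_le, le_div_iff₀ hs, hI, div_mul_eq_mul_div 2 lam, le_div_iff₀ hlampos]
  linear_combination lam / 4 * h2 + h1 / 2 + h3 / 2
end
end

section
/- Let M ∈ ℝ^{3×3} be symmetric and let M̄ := Tr(M)·I₃ − M. Then for every ρ ∈ ℝ³, with R_ρ(ρ) := (1/(1+‖ρ‖²))·((1−‖ρ‖²)I₃ + 2ρρᵀ + 2[ρ]×), one has (1/4)Tr(M(I₃ − R_ρ(ρ))) = (1/2)·(ρᵀM̄ρ)/(1+‖ρ‖²). -/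
/-!
By linearity of `A ↦ Tr(M A)` the three parts of `rodr ρ` contribute separately: the identity part
gives a multiple of `Tr M`, the rank-one part gives the quadratic form `ρᵀMρ`, and the skew part
contributes nothing because `M` is symmetric (`trace_mul_skew`). Since `1 + ‖ρ‖² > 0`, the
denominators can be cleared, leaving a polynomial identity in `Tr M`, `ρᵀMρ` and `‖ρ‖²`.
-/

open Matrix

noncomputable section

/-- The Rodriguez-parameter rotation matrix (eq. (65)). -/
def rodr (ρ : Fin 3 → ℝ) : Matrix (Fin 3) (Fin 3) ℝ :=
  (1/(1 + ρ ⬝ᵥ ρ)) • ((1 - ρ ⬝ᵥ ρ) • (1 : Matrix (Fin 3) (Fin 3) ℝ)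
    + (2:ℝ) • vecMulVec ρ ρ + (2:ℝ) • skew ρ)

/-- The trace pairing of a symmetric matrix with a skew-symmetric one vanishes. -/
lemma trace_mul_skew (M : Matrix (Fin 3) (Fin 3) ℝ) (hM : M.IsSymm) (x : Fin 3 → ℝ) :
    (M * skew x).trace = 0 := by
  have h01 := hM.apply 0 1
  have h02 := hM.apply 0 2
  have h12 := hM.apply 1 2
  simp only [trace, diag, mul_apply, skew, Fin.sum_univ_three]
  simp
  rw [h01, h02, h12]
  ring

/-- eq. (74): for symmetric `M` with `M̄ = Tr(M)I₃ − M`,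
`(1/4)Tr(M(I₃ − R_ρ(ρ))) = (1/2)(ρᵀM̄ρ)/(1+‖ρ‖²)`. -/
theorem trace_M_rodr (M : Matrix (Fin 3) (Fin 3) ℝ) (hM : M.IsSymm)
    (ρ : Fin 3 → ℝ) :
    (1/4) * (M * (1 - rodr ρ)).trace
      = (1/2) * (ρ ⬝ᵥ ((M.trace • (1 : Matrix (Fin 3) (Fin 3) ℝ) - M) *ᵥ ρ))
          / (1 + ρ ⬝ᵥ ρ) := by
  have hpos : 1 + ρ ⬝ᵥ ρ ≠ 0 := by
    have h : 0 ≤ ρ ⬝ᵥ ρ := Finset.sum_nonneg fun i _ => mul_self_nonneg (ρ i)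
    positivity
  have hq : (M * vecMulVec ρ ρ).trace = ρ ⬝ᵥ (M *ᵥ ρ) := by
    rw [mul_vecMulVec, trace_vecMulVec, dotProduct_comm]
  simp only [rodr, mul_sub, mul_add, mul_smul_comm, mul_one, trace_sub, trace_add, trace_smul,
    trace_mul_skew M hM, hq, sub_mulVec, smul_mulVec, one_mulVec, dotProduct_sub,
    dotProduct_smul, smul_eq_mul]
  field_simp
  ring
end
end

section
/- Let M ∈ ℝ^{3×3} be symmetric and let M̄ := Tr(M)·I₃ − M. Then for every ρ ∈ ℝ³, with R_ρ(ρ) := (1/(1+‖ρ‖²))·((1−‖ρ‖²)I₃ + 2ρρᵀ + 2[ρ]×), one has vex(P_a(M·R_ρ(ρ))) = (1/(1+‖ρ‖²))·(I₃ − [ρ]×)·M̄·ρ. -/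
open Matrix

noncomputable section

/-- eq. (75): for symmetric `M` with `M̄ = Tr(M)I₃ − M`,
`vex(P_a(M·R_ρ(ρ))) = (1/(1+‖ρ‖²))(I₃ − [ρ]×)M̄ρ`. -/
theorem vexPa_M_rodr (M : Matrix (Fin 3) (Fin 3) ℝ) (hM : M.IsSymm)
    (ρ : Fin 3 → ℝ) :
    vexPa (M * rodr ρ)
      = (1/(1 + ρ ⬝ᵥ ρ))
          • (((1 - skew ρ) * (M.trace • (1 : Matrix (Fin 3) (Fin 3) ℝ) - M)) *ᵥ ρ) := by
  have h10 : M 1 0 = M 0 1 := hM.apply 0 1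
  have h20 : M 2 0 = M 0 2 := hM.apply 0 2
  have h21 : M 2 1 = M 1 2 := hM.apply 1 2
  -- The scalar `1 / (1 + ‖ρ‖²)` is a common factor of both sides, so it need not be expanded.
  unfold vexPa rodr
  generalize 1 / (1 + ρ ⬝ᵥ ρ) = c
  -- Each coordinate is then a polynomial identity in `c` and the entries of `M` and `ρ`.
  ext i
  fin_cases i <;>
    simp [skew, Matrix.mul_apply, Matrix.mulVec, dotProduct, Fin.sum_univ_three, vecMulVec_apply,
      Matrix.trace, Matrix.one_apply, h10, h20, h21] <;>
    ring
end
end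

section
/- Let M ∈ ℝ^{3×3} be symmetric such that M̄ := Tr(M)·I₃ − M is positive semidefinite, and let λ̲ be the minimum eigenvalue of M̄. Then for every ρ ∈ ℝ³, with R_ρ(ρ) := (1/(1+‖ρ‖²))·((1−‖ρ‖²)I₃ + 2ρρᵀ + 2[ρ]×), one has ‖vex(P_a(M·R_ρ(ρ)))‖² ≥ λ̲·(1 − ‖ρ‖²/(1+‖ρ‖²))·(ρᵀM̄ρ)/(1+‖ρ‖²). -/
/-!
Write `s = ‖ρ‖²` and `M̄ = Tr(M)I₃ − M`. The symmetric part of `rodr ρ` contributes `ρ × Mρ` and the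
skew part contributes `M̄ρ`, because `M[ρ]× + [ρ]×M = [M̄ρ]×`. Hence
`vex(P_a(M·R)) = (M̄ρ + ρ × Mρ)/(1 + s)`. Since `Mρ = Tr(M)ρ − M̄ρ`, the vector `ρ × Mρ` is orthogonal
to `M̄ρ`, so `(1 + s)²‖vex(P_a(M·R))‖² = ‖M̄ρ‖² + ‖ρ × Mρ‖² ≥ ‖M̄ρ‖²`
(`vexPa_mul_rodr_dotProduct_self_ge`).

The right-hand side of the theorem is `λ̲ ρᵀM̄ρ/(1 + s)²`, so what remains is `λ̲ ρᵀM̄ρ ≤ ‖M̄ρ‖²`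
(`mul_dotProduct_mulVec_le`). This follows from the Rayleigh bound `λ̲‖ρ‖² ≤ ρᵀM̄ρ` and the
Cauchy–Schwarz inequality `(ρᵀM̄ρ)² ≤ ‖ρ‖²‖M̄ρ‖²`.
-/

open Matrix

noncomputable section

/-- The Rayleigh bound: a lower bound for the eigenvalues bounds the quadratic form from below.
The spectrum of `A - c • 1` is that of `A` shifted by `-c`, so `A - c • 1` is positive
semidefinite. -/
lemma mul_dotProduct_self_le_of_le_eigenvalues {n : Type*} [Fintype n] [DecidableEq n]
    {A : Matrix n n ℝ} (hA : A.IsHermitian) {c : ℝ} (hc : ∀ i, c ≤ hA.eigenvalues i) (x : n → ℝ) :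
    c * (x ⬝ᵥ x) ≤ x ⬝ᵥ (A *ᵥ x) := by
  have hB : (A - c • (1 : Matrix n n ℝ)).IsHermitian := by
    refine hA.sub ?_
    simp [Matrix.IsHermitian]
  have hps : (A - c • (1 : Matrix n n ℝ)).PosSemidef := by
    rw [hB.posSemidef_iff_eigenvalues_nonneg]
    intro i
    have h1 := hB.eigenvalues_mem_spectrum_real i
    have h2 : c + hB.eigenvalues i ∈ spectrum ℝ A := by
      have h3 := (spectrum.add_mem_add_iff (s := c)).2 h1
      rw [Algebra.algebraMap_eq_smul_one, add_sub_cancel] at h3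
      rwa [add_comm]
    rw [hA.spectrum_real_eq_range_eigenvalues] at h2
    obtain ⟨j, hj⟩ := h2
    have := hc j
    simp only [Pi.zero_apply]
    linarith
  have h := hps.dotProduct_mulVec_nonneg x
  simp only [star_trivial, sub_mulVec, smul_mulVec, one_mulVec, dotProduct_sub, dotProduct_smul,
    smul_eq_mul] at h
  linarith

/-- As quadratic forms, `c A ≤ A²` when `A` is positive semidefinite
with all eigenvalues at least `c`. -/
lemma mul_dotProduct_mulVec_le {n : Type*} [Fintype n] [DecidableEq n]
    {A : Matrix n n ℝ} (hA : A.PosSemidef) {c : ℝ} (hc : ∀ i, c ≤ hA.1.eigenvalues i)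
    (x : n → ℝ) : c * (x ⬝ᵥ (A *ᵥ x)) ≤ (A *ᵥ x) ⬝ᵥ (A *ᵥ x) := by
  rcases eq_or_ne x 0 with rfl | hx
  · simp
  have hpos : 0 < x ⬝ᵥ x := by simpa using dotProduct_star_self_pos_iff.2 hx
  have hray := mul_dotProduct_self_le_of_le_eigenvalues hA.1 hc x
  have hq : 0 ≤ x ⬝ᵥ (A *ᵥ x) := by simpa using hA.dotProduct_mulVec_nonneg x
  have hcs : (x ⬝ᵥ (A *ᵥ x)) ^ 2 ≤ (x ⬝ᵥ x) * ((A *ᵥ x) ⬝ᵥ (A *ᵥ x)) := by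
    simpa [dotProduct, sq] using
      Finset.sum_mul_sq_le_sq_mul_sq Finset.univ x (A *ᵥ x)
  refine le_of_mul_le_mul_left ?_ hpos
  nlinarith [mul_le_mul_of_nonneg_right hray hq]

/-- Up to the factor `1 + ‖ρ‖²`, the vector `M̄ρ` is an orthogonal component of `vex(P_a(M·R))`. -/
lemma vexPa_mul_rodr_dotProduct_self_ge {M : Matrix (Fin 3) (Fin 3) ℝ} (hM : M.IsSymm)
    (ρ : Fin 3 → ℝ) :
    (((M.trace • (1 : Matrix (Fin 3) (Fin 3) ℝ) - M) *ᵥ ρ) ⬝ᵥ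
        ((M.trace • (1 : Matrix (Fin 3) (Fin 3) ℝ) - M) *ᵥ ρ)) / (1 + ρ ⬝ᵥ ρ) ^ 2
      ≤ vexPa (M * rodr ρ) ⬝ᵥ vexPa (M * rodr ρ) := by
  set w := (M.trace • (1 : Matrix (Fin 3) (Fin 3) ℝ) - M) *ᵥ ρ with hw
  set z := ρ ⨯₃ (M *ᵥ ρ) with hz
  have h01 := hM.apply 0 1
  have h02 := hM.apply 0 2
  have h12 := hM.apply 1 2
  have hwe : w = M.trace • ρ - M *ᵥ ρ := by
    rw [hw, sub_mulVec, smul_mulVec, one_mulVec]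
  have hv : vexPa (M * rodr ρ) = (1 / (1 + ρ ⬝ᵥ ρ)) • (w + z) := by
    rw [rodr]
    generalize 1 / (1 + ρ ⬝ᵥ ρ) = t
    ext i
    fin_cases i <;>
      simp [hwe, hz, vexPa, skew, crossProduct, mul_apply, mulVec, dotProduct, trace,
        Fin.sum_univ_three, vecMulVec_apply, one_apply, vecHead, vecTail, h01, h02, h12] <;> ring
  have horth : w ⬝ᵥ z = 0 := by
    rw [hwe, hz, sub_dotProduct, smul_dotProduct, dot_self_cross, dot_cross_self]
    simp
  have hzz : 0 ≤ z ⬝ᵥ z := by simpa using dotProduct_star_self_nonneg z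
  have hs : 0 ≤ ρ ⬝ᵥ ρ := by simpa using dotProduct_star_self_nonneg ρ
  have hexp : vexPa (M * rodr ρ) ⬝ᵥ vexPa (M * rodr ρ)
      = (w ⬝ᵥ w + z ⬝ᵥ z) / (1 + ρ ⬝ᵥ ρ) ^ 2 := by
    rw [hv, smul_dotProduct, dotProduct_smul, add_dotProduct, dotProduct_add, dotProduct_add,
      dotProduct_comm z w, horth]
    simp only [smul_eq_mul]
    field_simp
    ring
  rw [hexp]
  gcongr
  linarith

/-- ineq. (76): for symmetric `M` with `M̄ = Tr(M)I₃ − M`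
positive semidefinite and `λ̲` the minimum eigenvalue of `M̄`,
`‖vex(P_a(M·R_ρ(ρ)))‖² ≥ λ̲(1 − ‖ρ‖²/(1+‖ρ‖²))(ρᵀM̄ρ)/(1+‖ρ‖²)`. -/
theorem vexPa_M_rodr_sq_norm_ge (M : Matrix (Fin 3) (Fin 3) ℝ) (hM : M.IsSymm)
    (hpsd : (M.trace • (1 : Matrix (Fin 3) (Fin 3) ℝ) - M).PosSemidef)
    (lam : ℝ) (hlam : lam = ⨅ i, hpsd.1.eigenvalues i)
    (ρ : Fin 3 → ℝ) :
    vexPa (M * rodr ρ) ⬝ᵥ vexPa (M * rodr ρ)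
      ≥ lam * (1 - (ρ ⬝ᵥ ρ)/(1 + ρ ⬝ᵥ ρ))
          * ((ρ ⬝ᵥ ((M.trace • (1 : Matrix (Fin 3) (Fin 3) ℝ) - M) *ᵥ ρ))
              / (1 + ρ ⬝ᵥ ρ)) := by
  have hle : ∀ i, lam ≤ hpsd.1.eigenvalues i := fun i ↦
    hlam ▸ ciInf_le (Set.finite_range _).bddBelow i
  refine ge_iff_le.2 (le_trans ?_ (vexPa_mul_rodr_dotProduct_self_ge hM ρ))
  have hs : 0 ≤ ρ ⬝ᵥ ρ := by simpa using dotProduct_star_self_nonneg ρ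
  have hs' : 1 + ρ ⬝ᵥ ρ ≠ 0 := by positivity
  have hmain := mul_dotProduct_mulVec_le hpsd hle ρ
  calc _ = lam * (ρ ⬝ᵥ ((M.trace • (1 : Matrix (Fin 3) (Fin 3) ℝ) - M) *ᵥ ρ))
        / (1 + ρ ⬝ᵥ ρ) ^ 2 := by
        field_simp
        ring
    _ ≤ _ := by gcongr
end
end

section
/- Let R, R̂ ∈ SO(3), let v₁, …, v_n ∈ ℝ³, and let s₁, …, s_n ∈ ℝ. Set υᵢᴮ := Rᵀvᵢ, υ̂ᵢᴮ := R̂ᵀvᵢ, Mᴮ := Σᵢ sᵢ·υᵢᴮ(υᵢᴮ)ᵀ, and R̃ := RᵀR̂. Then [Σᵢ (sᵢ/2)·(υ̂ᵢᴮ × υᵢᴮ)]× = P_a(Mᴮ·R̃); equivalently, vex(P_a(Mᴮ·R̃)) = Σᵢ (sᵢ/2)·(υ̂ᵢᴮ × υᵢᴮ). -/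
/-!
The orthogonality `R Rᵀ = 1` turns `Mᴮ R̃` into `∑ sᵢ υᵢ υ̂ᵢᵀ` (`sum_vecMulVec_mul_Rtilde`). The
antisymmetric part of a rank-one matrix `a bᵀ` has axial vector `(b × a) / 2`, which gives the
vector identity by linearity (`vexPa_sum_vecMulVec`); the matrix identity follows because
`[vex (P_a A)]× = P_a A` for every `A` (`skew_vexPa`).
-/

open Matrix

noncomputable section

/-- The body-frame moment matrix turned by the attitude error: since `R Rᵀ = 1`, one has
`υᵀ Rᵀ R̂ = (R̂ᵀ R Rᵀ v)ᵀ = υ̂ᵀ`, so each rank-one term `υ υᵀ` becomes `υ υ̂ᵀ`. -/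
lemma sum_vecMulVec_mul_Rtilde {n : ℕ} (R Rh : Matrix (Fin 3) (Fin 3) ℝ) (hR' : R * Rᵀ = 1)
    (v : Fin n → Fin 3 → ℝ) (s : Fin n → ℝ) :
    (∑ i, s i • vecMulVec (Rᵀ *ᵥ v i) (Rᵀ *ᵥ v i)) * (Rᵀ * Rh)
      = ∑ i, s i • vecMulVec (Rᵀ *ᵥ v i) (Rhᵀ *ᵥ v i) := by
  rw [Finset.sum_mul]
  refine Finset.sum_congr rfl fun i _ => ?_
  rw [smul_mul_assoc, vecMulVec_mul, mulVec_transpose, mulVec_transpose, vecMul_vecMul,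
    ← Matrix.mul_assoc, hR', Matrix.one_mul]

lemma vexPa_sum_vecMulVec {n : ℕ} (a b : Fin n → Fin 3 → ℝ) (s : Fin n → ℝ) :
    vexPa (∑ i, s i • vecMulVec (a i) (b i)) = ∑ i, (s i / 2) • crossProduct (b i) (a i) := by
  ext j
  fin_cases j <;>
    simp [vexPa, Matrix.sum_apply, vecMulVec_apply, cross_apply, ← Finset.sum_sub_distrib,
      Finset.mul_sum] <;>
    exact Finset.sum_congr rfl fun i _ => by ring

lemma skew_vexPa (A : Matrix (Fin 3) (Fin 3) ℝ) : skew (vexPa A) = Pa A := by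
  ext j k
  fin_cases j <;> fin_cases k <;> simp [skew, vexPa, Pa] <;> ring

/-- eq. (44): with `υᵢᴮ = Rᵀvᵢ`, `υ̂ᵢᴮ = R̂ᵀvᵢ`,
`Mᴮ = Σᵢ sᵢ υᵢᴮ(υᵢᴮ)ᵀ`, `R̃ = RᵀR̂`, one has
`[Σᵢ (sᵢ/2)(υ̂ᵢᴮ × υᵢᴮ)]× = P_a(MᴮR̃)`, i.e.
`vex(P_a(MᴮR̃)) = Σᵢ (sᵢ/2)(υ̂ᵢᴮ × υᵢᴮ)`. -/
theorem vexPa_MB_Rtilde_eq_sum_cross (n : ℕ)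
    (R Rh : Matrix (Fin 3) (Fin 3) ℝ)
    (hR : Rᵀ * R = 1) (hR' : R * Rᵀ = 1) (hdet : R.det = 1)
    (hRh : Rhᵀ * Rh = 1) (hRh' : Rh * Rhᵀ = 1) (hdeth : Rh.det = 1)
    (v : Fin n → Fin 3 → ℝ) (s : Fin n → ℝ) :
    skew (∑ i, (s i / 2) • crossProduct (Rhᵀ *ᵥ v i) (Rᵀ *ᵥ v i))
      = Pa ((∑ i, s i • vecMulVec (Rᵀ *ᵥ v i) (Rᵀ *ᵥ v i)) * (Rᵀ * Rh)) ∧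
    vexPa ((∑ i, s i • vecMulVec (Rᵀ *ᵥ v i) (Rᵀ *ᵥ v i)) * (Rᵀ * Rh))
      = ∑ i, (s i / 2) • crossProduct (Rhᵀ *ᵥ v i) (Rᵀ *ᵥ v i) := by
  rw [sum_vecMulVec_mul_Rtilde R Rh hR' v s, ← vexPa_sum_vecMulVec]
  exact ⟨skew_vexPa _, rfl⟩
end
end
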